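/- arXiv:1910.04911 — 5 statements merged into one kernel-verified Lean document; each statement's English description precedes it below -/
import Mathlib

section
/- Let n ≥ 1, d ≥ 1 and W ≥ 0 be integers. Let A, B be n×n integer matrices, let C = A⋆B be their Min-Plus product, let C̃ be an n×n integer matrix with |C̃_{i,j} − C_{i,j}| ≤ W for all i, j, and let X, Y : [n] → ℤ^d satisfy |B_{k,j} − X(k)ᵀY(j)| ≤ W for all k, j. Define S to be the set of triples (i, k, j) ∈ [n]³ with A_{i,k} + X(k)ᵀY(j) ≤ 2W + C̃_{i,j}. Then: (1) every strongly relevant triple belongs to S, and (2) every triple in S is weakly relevant. -/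
/-- Min-Plus product of two `(n+1) × (n+1)` integer matrices. -/
def minPlus {n : ℕ} (A B : Fin (n+1) → Fin (n+1) → ℤ) : Fin (n+1) → Fin (n+1) → ℤ :=
  fun i j => Finset.univ.inf' Finset.univ_nonempty (fun k => A i k + B k j)

/-- The set `S = {(i,k,j) : A_{i,k} + X(k)ᵀY(j) ≤ 2W + C̃_{i,j}}` contains every
strongly relevant triple, and every triple of `S` is weakly relevant. -/
theorem stmt2 {n d : ℕ} (hd : 1 ≤ d) (W : ℤ) (hW : 0 ≤ W)
    (A B Ct : Fin (n+1) → Fin (n+1) → ℤ)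
    (hCt : ∀ i j, |Ct i j - minPlus A B i j| ≤ W)
    (X Y : Fin (n+1) → Fin d → ℤ)
    (hXY : ∀ k j, |B k j - ∑ t, X k t * Y j t| ≤ W) :
    (∀ i k j, A i k + B k j = minPlus A B i j →
        A i k + ∑ t, X k t * Y j t ≤ 2 * W + Ct i j) ∧
    (∀ i k j, A i k + ∑ t, X k t * Y j t ≤ 2 * W + Ct i j →
        |A i k + B k j - Ct i j| ≤ 3 * W) := by
  constructor
  · intro i k j h
    have h1 := abs_le.1 (hCt i j)
    have h2 := abs_le.1 (hXY k j)
    linarith [h1.1, h1.2, h2.1, h2.2]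
  · intro i k j h
    have h1 := abs_le.1 (hCt i j)
    have h2 := abs_le.1 (hXY k j)
    have h3 : minPlus A B i j ≤ A i k + B k j :=
      Finset.inf'_le (fun k => A i k + B k j) (Finset.mem_univ k)
    rw [abs_le]
    constructor <;> linarith [h1.1, h1.2, h2.1, h2.2]
end

section
/- Let n ≥ 2, ρ ≥ 1 and W ≥ 0 be integers with ρ ≤ n, let A, B, C̃ be n×n integer matrices, and set R = ⌈10ρ ln n⌉. Let j¹, j², …, j^R be drawn independently and uniformly at random from [n]. Call a pair (i, k) ∈ [n]² uncovered if |A_{i,k} + B_{k,j^r} − C̃_{i,j^r}| > 3W for every r ∈ [R]. Then with probability at least 1 − n^{−8}, the number of triples (i, k, j) ∈ [n]³ that are weakly relevant and whose pair (i, k) is uncovered is at most n³/ρ. -/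
open scoped Classical

theorem aux_unc (n ρ R : ℕ) (hn : 2 ≤ n) (hρ : 1 ≤ ρ) (hR : (10 * ρ : ℝ) * Real.log n ≤ R)
    (S : Finset (Fin n)) (hS : (n : ℝ) / ρ < S.card) :
    ((Finset.univ.filter (fun js : Fin R → Fin n => ∀ r, js r ∉ S)).card : ℝ)
      ≤ (n : ℝ) ^ R * ((n : ℝ) ^ 10)⁻¹ := by
  have e : (Finset.univ.filter (fun js : Fin R → Fin n => ∀ r, js r ∉ S))
      = Fintype.piFinset (fun _ : Fin R => Sᶜ) := by
    ext js; simp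
  rw [e, Fintype.card_piFinset_const]
  have hn0 : (0 : ℝ) < n := by positivity
  have hρ0 : (0 : ℝ) < ρ := by positivity
  have h1 : ((Sᶜ.card : ℕ) : ℝ) ≤ n * Real.exp (-(1 / ρ)) := by
    have h2 : (Sᶜ.card : ℝ) + S.card = n := by
      have := Finset.card_compl_add_card S
      rw [Fintype.card_fin] at this
      exact_mod_cast this
    have h3 := Real.add_one_le_exp (-(1 / (ρ : ℝ)))
    have h4 := mul_le_mul_of_nonneg_left h3 hn0.le
    have h5 : (n : ℝ) * (-(1 / (ρ : ℝ)) + 1) = n - n / ρ := by ring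
    linarith
  push_cast
  calc ((Sᶜ.card : ℕ) : ℝ) ^ R ≤ (n * Real.exp (-(1 / ρ))) ^ R := by gcongr
    _ = (n : ℝ) ^ R * Real.exp (-(1 / ρ)) ^ R := mul_pow _ _ _
    _ ≤ _ := by
      gcongr
      rw [← Real.exp_nat_mul]
      have : ((n : ℝ) ^ 10)⁻¹ = Real.exp (-(10 * Real.log n)) := by
        rw [Real.exp_neg]
        congr 1
        have := Real.exp_nat_mul (Real.log n) 10
        rw [Real.exp_log hn0] at this
        rw [← this]; norm_num
      rw [this]
      apply Real.exp_le_exp.mpr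
      have : 10 * Real.log n ≤ R / ρ := by
        rw [le_div_iff₀ hρ0]; linarith
      have h6 : (R : ℝ) * (-(1 / ρ)) = - (R / ρ) := by ring
      linarith

theorem aux_main (n ρ R : ℕ) (hn : 2 ≤ n) (hρ : 1 ≤ ρ) (hR : (10 * ρ : ℝ) * Real.log n ≤ R)
    (S : Fin n → Fin n → Finset (Fin n)) :
    1 - (n : ℝ) ^ (-(8 : ℤ)) ≤
      ((Finset.univ.filter (fun js : Fin R → Fin n =>
          ((Finset.univ.filter (fun p : Fin n × Fin n × Fin n =>
              p.2.2 ∈ S p.1 p.2.1 ∧ ∀ r, js r ∉ S p.1 p.2.1)).card : ℝ)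
            ≤ (n : ℝ) ^ 3 / ρ)).card : ℝ) / (n : ℝ) ^ R := by
  have hn0 : (0 : ℝ) < n := by positivity
  set G := Finset.univ.filter (fun js : Fin R → Fin n =>
          ((Finset.univ.filter (fun p : Fin n × Fin n × Fin n =>
              p.2.2 ∈ S p.1 p.2.1 ∧ ∀ r, js r ∉ S p.1 p.2.1)).card : ℝ)
            ≤ (n : ℝ) ^ 3 / ρ) with hG
  let H : Finset (Fin n × Fin n) :=
    Finset.univ.filter (fun q => (n : ℝ) / ρ < (S q.1 q.2).card)
  have hsub : Gᶜ ⊆ H.biUnion (fun q =>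
      Finset.univ.filter (fun js : Fin R → Fin n => ∀ r, js r ∉ S q.1 q.2)) := by
    intro js hjs
    by_contra hc
    simp only [H, Finset.mem_biUnion, Finset.mem_filter, Finset.mem_univ, true_and, not_exists,
      not_and] at hc
    apply (Finset.mem_compl.mp hjs)
    rw [hG, Finset.mem_filter]
    refine ⟨Finset.mem_univ _, ?_⟩
    rw [Finset.card_filter]
    simp only [Fintype.sum_prod_type]
    push_cast
    have hb : ∀ i k : Fin n, (∑ j : Fin n,
        (if j ∈ S i k ∧ ∀ r, js r ∉ S i k then (1 : ℝ) else 0)) ≤ n / ρ := by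
      intro i k
      by_cases hu : ∀ r, js r ∉ S i k
      · have h1 : ¬ ((n : ℝ) / ρ < (S i k).card) := fun h => hc (i, k) h hu
        simp only [hu, implies_true, and_true, not_false_eq_true]
        simpa using h1
      · simp only [hu, and_false, if_false, Finset.sum_const_zero]
        positivity
    calc _ ≤ ∑ i : Fin n, ∑ k : Fin n, (n : ℝ) / ρ :=
          Finset.sum_le_sum fun i _ => Finset.sum_le_sum fun k _ => hb i k
      _ = _ := by simp; ring
  have hcard : (Gᶜ.card : ℝ) ≤ (n : ℝ) ^ R * ((n : ℝ) ^ 8)⁻¹ := by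
    calc (Gᶜ.card : ℝ) ≤ ∑ q ∈ H,
          ((Finset.univ.filter (fun js : Fin R → Fin n => ∀ r, js r ∉ S q.1 q.2)).card : ℝ) := by
          exact_mod_cast (Finset.card_le_card hsub).trans Finset.card_biUnion_le
      _ ≤ ∑ q ∈ H, (n : ℝ) ^ R * ((n : ℝ) ^ 10)⁻¹ :=
          Finset.sum_le_sum fun q hq => aux_unc n ρ R hn hρ hR _ (Finset.mem_filter.mp hq).2
      _ ≤ ∑ q : Fin n × Fin n, (n : ℝ) ^ R * ((n : ℝ) ^ 10)⁻¹ :=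
          Finset.sum_le_sum_of_subset_of_nonneg (Finset.subset_univ _)
            (fun _ _ _ => by positivity)
      _ = _ := by
          simp
          field_simp
  have htot : (Gᶜ.card : ℝ) + G.card = (n : ℝ) ^ R := by
    have := Finset.card_compl_add_card G
    rw [Fintype.card_fun, Fintype.card_fin, Fintype.card_fin] at this
    exact_mod_cast this
  rw [le_div_iff₀ (by positivity)]
  have : (n : ℝ) ^ (-(8 : ℤ)) = ((n : ℝ) ^ 8)⁻¹ := by
    rw [zpow_neg]; norm_cast
  rw [this]
  linarith

/-- With `R = ⌈10 ρ ln n⌉` uniformly random independent samples `j¹,…,j^R ∈ [n]`,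
with probability at least `1 - n^{-8}` the number of weakly relevant triples `(i,k,j)`
whose pair `(i,k)` is uncovered is at most `n³/ρ`. -/
theorem stmt4 (n ρ : ℕ) (hn : 2 ≤ n) (hρ : 1 ≤ ρ) (hρn : ρ ≤ n) (W : ℤ) (hW : 0 ≤ W)
    (A B Ct : Fin n → Fin n → ℤ) :
    1 - (n : ℝ) ^ (-(8 : ℤ)) ≤
      ((Finset.univ.filter (fun js : Fin (⌈(10 * ρ : ℝ) * Real.log n⌉₊) → Fin n =>
          ((Finset.univ.filter (fun p : Fin n × Fin n × Fin n =>
              |A p.1 p.2.1 + B p.2.1 p.2.2 - Ct p.1 p.2.2| ≤ 3 * W ∧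
              ∀ r, 3 * W < |A p.1 p.2.1 + B p.2.1 (js r) - Ct p.1 (js r)|)).card : ℝ)
            ≤ (n : ℝ) ^ 3 / ρ)).card : ℝ) / (n : ℝ) ^ (⌈(10 * ρ : ℝ) * Real.log n⌉₊) := by
  have := aux_main n ρ _ hn hρ (Nat.le_ceil _)
    (fun i k => Finset.univ.filter (fun j => |A i k + B k j - Ct i j| ≤ 3 * W))
  simp only [Finset.mem_filter, Finset.mem_univ, true_and, not_le] at this
  convert this
end

section
/- Let t ≥ 0 be an integer and let B be an n×n integer matrix such that every entry of the t-fold finite difference 𝒟ᵗB has absolute value at most M, i.e. |(𝒟ᵗB)_{i,j}| ≤ M for all valid indices i, j. Then there exist integer vectors X(1), …, X(n) and Y(1), …, Y(n) in ℤ^{2t} such that |B_{i,j} − X(i)ᵀY(j)| ≤ M·n^{2t} for all i, j ∈ [n]. -/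
/-- The finite difference operator on integer matrices (presented as functions on `ℕ × ℕ`). -/
def finDiff (B : ℕ → ℕ → ℤ) : ℕ → ℕ → ℤ :=
  fun i j => B (i+1) (j+1) - B i (j+1) - B (i+1) j + B i j

lemma finDiff_sum (B : ℕ → ℕ → ℤ) (i j : ℕ) :
    B i j = B i 0 - B 0 0 + B 0 j
      + ∑ a ∈ Finset.range i, ∑ b ∈ Finset.range j, finDiff B a b := by
  have h1 : ∀ a, ∑ b ∈ Finset.range j, finDiff B a b
      = (B (a+1) j - B a j) - (B (a+1) 0 - B a 0) := by
    intro a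
    rw [← Finset.sum_range_sub (fun b => B (a+1) b - B a b) j]
    apply Finset.sum_congr rfl
    intro b _
    simp only [finDiff]
    ring
  have h2 : ∑ a ∈ Finset.range i, ∑ b ∈ Finset.range j, finDiff B a b
      = (B i j - B i 0) - (B 0 j - B 0 0) := by
    rw [← Finset.sum_range_sub (fun a => B a j - B a 0) i]
    apply Finset.sum_congr rfl
    intro a _
    rw [h1]
    ring
  rw [h2]
  ring

/-- If every entry of the `t`-fold finite difference `𝒟ᵗB` of an `n × n` integer matrix `B`
has absolute value at most `M`, then `B` is entrywise within `M·n^{2t}` of a matrix of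
rank at most `2t`, witnessed by vectors `X(i), Y(j) ∈ ℤ^{2t}`. -/
theorem stmt5 (n t : ℕ) (M : ℤ) (hM : 0 ≤ M) (B : ℕ → ℕ → ℤ)
    (hB : ∀ i j, i < n - t → j < n - t → |(finDiff^[t] B) i j| ≤ M) :
    ∃ X Y : ℕ → Fin (2 * t) → ℤ, ∀ i j, i < n → j < n →
      |B i j - ∑ s, X i s * Y j s| ≤ M * (n : ℤ) ^ (2 * t) := by
  induction t generalizing n B with
  | zero =>
    refine ⟨fun _ _ => 0, fun _ _ => 0, fun i j hi hj => ?_⟩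
    simpa using hB i j (by simpa using hi) (by simpa using hj)
  | succ t ih =>
    obtain ⟨X, Y, h⟩ := ih (n - 1) (finDiff B) (fun i j hi hj => by
      have := hB i j (by omega) (by omega)
      rwa [Function.iterate_succ_apply] at this)
    refine ⟨fun i => (Fin.cons (B i 0 - B 0 0) (Fin.cons 1
        (fun s => ∑ a ∈ Finset.range i, X a s)) : Fin (2 * t + 1 + 1) → ℤ),
      fun j => (Fin.cons 1 (Fin.cons (B 0 j)
        (fun s => ∑ b ∈ Finset.range j, Y b s)) : Fin (2 * t + 1 + 1) → ℤ),
      fun i j hi hj => ?_⟩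
    change |B i j - ∑ s : Fin (2 * t + 1 + 1), _| ≤ _
    rw [Fin.sum_univ_succ, Fin.sum_univ_succ]
    simp only [Fin.cons_zero, Fin.cons_succ]
    have hs : ∑ s, (∑ a ∈ Finset.range i, X a s) * (∑ b ∈ Finset.range j, Y b s)
        = ∑ a ∈ Finset.range i, ∑ b ∈ Finset.range j, ∑ s, X a s * Y b s := by
      simp_rw [Finset.sum_mul_sum]
      rw [Finset.sum_comm]
      apply Finset.sum_congr rfl
      intro a _
      rw [Finset.sum_comm]
    have he : B i j - ((B i 0 - B 0 0) * 1 + (1 * B 0 j +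
        ∑ s, (∑ a ∈ Finset.range i, X a s) * (∑ b ∈ Finset.range j, Y b s)))
        = ∑ a ∈ Finset.range i, ∑ b ∈ Finset.range j,
          (finDiff B a b - ∑ s, X a s * Y b s) := by
      rw [hs, finDiff_sum B i j]
      simp only [Finset.sum_sub_distrib]
      ring
    rw [he]
    have hn : ((n - 1 : ℕ) : ℤ) ≤ n := by omega
    calc _ ≤ ∑ a ∈ Finset.range i, ∑ b ∈ Finset.range j, M * (n : ℤ) ^ (2 * t) := by
          refine (Finset.abs_sum_le_sum_abs _ _).trans (Finset.sum_le_sum fun a ha => ?_)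
          refine (Finset.abs_sum_le_sum_abs _ _).trans (Finset.sum_le_sum fun b hb => ?_)
          rw [Finset.mem_range] at ha hb
          refine (h a b (by omega) (by omega)).trans ?_
          gcongr
      _ = (i * j : ℤ) * (M * (n : ℤ) ^ (2 * t)) := by
          simp; ring
      _ ≤ (n * n : ℤ) * (M * (n : ℤ) ^ (2 * t)) := by
          gcongr
      _ = _ := by ring
end

section
/- Let B be an n×n integer matrix satisfying the bounded discrete derivative condition |B_{i,j} + B_{i+1,j+1} − B_{i+1,j} − B_{i,j+1}| ≤ M for all 1 ≤ i, j ≤ n−1. Then for every Δ ≥ 1 and every Δ×Δ contiguous block of B (the submatrix with row indices in an interval I of length Δ and column indices in an interval J of length Δ), there exist integer vectors X(i) ∈ ℤ² for i ∈ I and Y(j) ∈ ℤ² for j ∈ J such that |B_{i,j} − X(i)ᵀY(j)| ≤ M·Δ² for all (i, j) ∈ I × J. In particular, every Δ×Δ block of B has M·Δ²-approximate rank at most 2. -/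
theorem aux_row (n : ℕ) (M : ℤ) (B : ℕ → ℕ → ℤ)
    (hB : ∀ i j, i + 1 < n → j + 1 < n →
      |B i j + B (i+1) (j+1) - B (i+1) j - B i (j+1)| ≤ M) (i j₀ : ℕ) (hi : i + 1 < n) :
    ∀ b : ℕ, j₀ + b < n →
      |B i j₀ + B (i+1) (j₀+b) - B (i+1) j₀ - B i (j₀+b)| ≤ M * b := by
  intro b
  induction b with
  | zero => intro _; simp
  | succ b ih =>
    intro h
    have h1 := ih (by omega)
    have h2 := hB i (j₀ + b) hi (by omega)
    rw [← add_assoc j₀ b 1]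
    rw [abs_le] at *
    push_cast
    constructor <;> linarith [h1.1, h1.2, h2.1, h2.2]

theorem aux_block (n : ℕ) (M : ℤ) (B : ℕ → ℕ → ℤ)
    (hB : ∀ i j, i + 1 < n → j + 1 < n →
      |B i j + B (i+1) (j+1) - B (i+1) j - B i (j+1)| ≤ M) (i₀ j₀ b : ℕ) (hb : j₀ + b < n) :
    ∀ a : ℕ, i₀ + a < n →
      |B i₀ j₀ + B (i₀+a) (j₀+b) - B (i₀+a) j₀ - B i₀ (j₀+b)| ≤ M * a * b := by
  intro a
  induction a with
  | zero => intro _; simp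
  | succ a ih =>
    intro h
    have h1 := ih (by omega)
    have h2 := aux_row n M B hB (i₀ + a) j₀ (by omega) b hb
    rw [← add_assoc i₀ a 1]
    rw [abs_le] at *
    push_cast
    constructor <;> linarith [h1.1, h1.2, h2.1, h2.2]

/-- If `B` has bounded discrete derivative (`|B_{i,j}+B_{i+1,j+1}-B_{i+1,j}-B_{i,j+1}| ≤ M`),
then every `Δ × Δ` contiguous block of `B` admits a rank-2 approximation (inner products of
2-dimensional integer vectors) within additive error `M·Δ²`; in particular every `Δ × Δ`
block has `M·Δ²`-approximate rank at most `2`. -/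
theorem stmt6 (n : ℕ) (M : ℤ) (hM : 0 ≤ M) (B : ℕ → ℕ → ℤ)
    (hB : ∀ i j, i + 1 < n → j + 1 < n →
      |B i j + B (i+1) (j+1) - B (i+1) j - B i (j+1)| ≤ M) :
    ∀ Δ : ℕ, 1 ≤ Δ → ∀ i₀ j₀ : ℕ, i₀ + Δ ≤ n → j₀ + Δ ≤ n →
      (∃ X Y : ℕ → Fin 2 → ℤ,
        ∀ i j, i₀ ≤ i → i < i₀ + Δ → j₀ ≤ j → j < j₀ + Δ →
          |B i j - ∑ s, X i s * Y j s| ≤ M * (Δ : ℤ) ^ 2) ∧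
      (∃ N : Matrix (Fin Δ) (Fin Δ) ℤ, N.rank ≤ 2 ∧
        ∀ a b : Fin Δ, |N a b - B (i₀ + a) (j₀ + b)| ≤ M * (Δ : ℤ) ^ 2) := by
  intro Δ hΔ i₀ j₀ hi hj
  have key : ∃ X Y : ℕ → Fin 2 → ℤ,
        ∀ i j, i₀ ≤ i → i < i₀ + Δ → j₀ ≤ j → j < j₀ + Δ →
          |B i j - ∑ s, X i s * Y j s| ≤ M * (Δ : ℤ) ^ 2 := by
    refine ⟨fun i => ![1, B i j₀ - B i₀ j₀], fun j => ![B i₀ j, 1], ?_⟩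
    intro i j h1 h2 h3 h4
    obtain ⟨a, rfl⟩ := Nat.exists_eq_add_of_le h1
    obtain ⟨b, rfl⟩ := Nat.exists_eq_add_of_le h3
    have h := aux_block n M B hB i₀ j₀ b (by omega) a (by omega)
    have ha : (a : ℤ) ≤ Δ := by omega
    have hb : (b : ℤ) ≤ Δ := by omega
    have hab : M * a * b ≤ M * (Δ : ℤ) ^ 2 := by
      rw [mul_assoc, pow_two]
      gcongr
    have e : B (i₀ + a) (j₀ + b) - ∑ s, (![1, B (i₀ + a) j₀ - B i₀ j₀] : Fin 2 → ℤ) s *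
        (![B i₀ (j₀ + b), 1] : Fin 2 → ℤ) s =
        B i₀ j₀ + B (i₀+a) (j₀+b) - B (i₀+a) j₀ - B i₀ (j₀+b) := by
      simp [Fin.sum_univ_two]
      ring
    show |B (i₀ + a) (j₀ + b) - ∑ s, (![1, B (i₀ + a) j₀ - B i₀ j₀] : Fin 2 → ℤ) s *
        (![B i₀ (j₀ + b), 1] : Fin 2 → ℤ) s| ≤ _
    rw [e]
    exact h.trans hab
  refine ⟨key, ?_⟩
  obtain ⟨X, Y, h⟩ := key
  let P : Matrix (Fin Δ) (Fin 2) ℤ := Matrix.of fun a s => X (i₀ + a) s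
  let Q : Matrix (Fin 2) (Fin Δ) ℤ := Matrix.of fun s b => Y (j₀ + b) s
  refine ⟨P * Q, (Matrix.rank_mul_le_left P Q).trans (Matrix.rank_le_width P), ?_⟩
  intro a b
  rw [abs_sub_comm]
  exact h (i₀ + a) (j₀ + b) (by omega) (by omega) (by omega) (by omega)
end

section
/- Let d ≥ 1 and n ≥ 1 be integers and let w' be a two-sided d-uniform weighted hypergraph on parts of size n. Then there exists a central d-dimensional integer array A with side length 2n+1 (indexed by {−n, …, n}^d, with A[i] = 0 whenever some coordinate of i is 0) such that the central maximum subarray sum of A equals the maximum hyperclique weight of w'. -/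
/-- Reduction from Two-sided `d`-Uniform Max-Weight Hyperclique to Central Maximum
Subarray Sum: for any two-sided `d`-uniform weighted hypergraph `w'` on parts of size `n`,
there is a central `d`-dimensional integer array `A` (indexed by `{-n,…,n}^d`, vanishing
whenever a coordinate is `0`) whose central maximum subarray sum equals the maximum
hyperclique weight of `w'`. -/
theorem stmt12 (d n : ℕ) (hd : 1 ≤ d) (hn : 1 ≤ n)
    (w' : (Fin d → Bool × Fin n) → ℤ) :
    ∃ A : (Fin d → ℤ) → ℤ,
      (∀ i : Fin d → ℤ, (∃ r, i r = 0) → A i = 0) ∧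
      ∃ m : ℤ,
        IsGreatest {x : ℤ | ∃ i δ : Fin d → ℤ,
          (∀ r, 1 ≤ i r ∧ i r ≤ (n : ℤ)) ∧
          (∀ r, 1 ≤ δ r ∧ δ r ≤ 2 * (n : ℤ)) ∧
          (∀ r, -(n : ℤ) ≤ i r - δ r ∧ i r - δ r ≤ -1) ∧
          x = ∑ j : Fin d → Bool, A (fun r => i r - δ r * (if j r then 1 else 0))} m ∧
        IsGreatest {x : ℤ | ∃ u v : Fin d → Fin n,
          x = ∑ s : Fin d → Bool, w' (fun r => (s r, if s r then u r else v r))} m := by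
  classical
  let g : ℤ → Fin n := fun z => ⟨(z.natAbs - 1) % n, Nat.mod_lt _ hn⟩
  let A : (Fin d → ℤ) → ℤ := fun x =>
    if ∃ r, x r = 0 then 0 else w' (fun r => (decide (x r < 0), g (x r)))
  have key : ∀ i δ : Fin d → ℤ, (∀ r, 1 ≤ i r) → (∀ r, i r - δ r ≤ -1) →
      ∑ j : Fin d → Bool, A (fun r => i r - δ r * (if j r then 1 else 0)) =
      ∑ s : Fin d → Bool, w' (fun r => (s r, if s r then g (i r - δ r) else g (i r))) := by
    intro i δ hi hδ
    refine Finset.sum_congr rfl fun j _ => ?_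
    have h0 : ¬ ∃ r, i r - δ r * (if j r then 1 else 0) = 0 := by
      rintro ⟨r, hr⟩
      have h1 := hi r
      have h2 := hδ r
      cases hj : j r <;> simp [hj] at hr <;> omega
    simp only [A]
    rw [if_neg h0]
    congr 1
    funext r
    have h1 := hi r
    have h2 := hδ r
    by_cases hj : j r = true
    · simp [hj]; omega
    · simp [hj]; omega
  have hg1 : ∀ a : Fin n, g ((a : ℤ) + 1) = a := by
    intro a
    apply Fin.ext
    have : ((a : ℤ) + 1).natAbs - 1 = a := by omega
    simp only [g, this]
    exact Nat.mod_eq_of_lt a.2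
  have hg2 : ∀ a : Fin n, g (-((a : ℤ) + 1)) = a := by
    intro a
    apply Fin.ext
    have : (-((a : ℤ) + 1)).natAbs - 1 = a := by omega
    simp only [g, this]
    exact Nat.mod_eq_of_lt a.2
  refine ⟨A, fun i hi => by simp only [A]; rw [if_pos hi], ?_⟩
  let F : (Fin d → Fin n) × (Fin d → Fin n) → ℤ := fun p =>
    ∑ s : Fin d → Bool, w' (fun r => (s r, if s r then p.1 r else p.2 r))
  haveI : Nonempty (Fin n) := ⟨⟨0, hn⟩⟩
  obtain ⟨p, hp⟩ := Finite.exists_max F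
  refine ⟨F p, ⟨?_, ?_⟩, ⟨p.1, p.2, rfl⟩, ?_⟩
  · have hk := key (fun r => (p.2 r : ℤ) + 1) (fun r => (p.1 r : ℤ) + p.2 r + 2)
      (fun r => by omega) (fun r => by omega)
    refine ⟨fun r => (p.2 r : ℤ) + 1, fun r => (p.1 r : ℤ) + p.2 r + 2,
      fun r => ?_, fun r => ?_, fun r => ?_, ?_⟩
    · have := (p.2 r).2
      constructor <;> beta_reduce <;> omega
    · have := (p.2 r).2
      have := (p.1 r).2
      constructor <;> beta_reduce <;> omega
    · have := (p.1 r).2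
      constructor <;> beta_reduce <;> omega
    · rw [hk]
      have e : ∀ r, (p.2 r : ℤ) + 1 - ((p.1 r : ℤ) + p.2 r + 2) = -((p.1 r : ℤ) + 1) :=
        fun r => by ring
      simp only [e, hg1, hg2, F]
  · rintro x ⟨i, δ, h1, -, h3, rfl⟩
    rw [key i δ (fun r => (h1 r).1) (fun r => (h3 r).2)]
    exact hp (fun r => g (i r - δ r), fun r => g (i r))
  · rintro x ⟨u, v, rfl⟩
    exact hp (u, v)
end
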